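/- Let ε ∈ [0, 1] and let h_u, h_v be vectors in the Euclidean space ℝ^F. Then for every real t with 0 ≤ t ≤ (1 + ε)·‖h_u − h_v‖ there exists a coefficient α ∈ [−1, 1] such that ‖(ε·h_u + α·h_v) − (ε·h_v + α·h_u)‖ = t. Hence FAGCN can freely shorten or enlarge the distance between the representations of a connected node pair to any value in [0, (1+ε)·‖h_u − h_v‖]. -/

import Mathlib

theorem smul_add_smul_sub_smul_add_smul_swap {R M : Type*} [Ring R] [AddCommGroup M] [Module R M]
    (a b : R) (x y : M) :
    (a • x + b • y) - (a • y + b • x) = (a - b) • (x - y) := by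
  simp only [sub_smul, smul_sub]
  abel

section

variable {E : Type*} [SeminormedAddCommGroup E] [NormedSpace ℝ E]

theorem exists_mem_Icc_norm_smul_eq {r t : ℝ} (hr : 0 ≤ r) (x : E)
    (ht : t ∈ Set.Icc 0 (r * ‖x‖)) :
    ∃ c ∈ Set.Icc 0 r, ‖c • x‖ = t := by
  have hcont : ContinuousOn (fun c : ℝ ↦ ‖c • x‖) (Set.Icc 0 r) := by fun_prop
  apply intermediate_value_Icc hr hcont
  simpa only [zero_smul, norm_zero, norm_smul_of_nonneg hr] using ht

theorem fagcn_distance_range_general {ε t : ℝ} (hε : -1 ≤ ε) (x y : E)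
    (ht : t ∈ Set.Icc 0 ((1 + ε) * ‖x - y‖)) :
    ∃ α ∈ Set.Icc (-1) ε, ‖(ε • x + α • y) - (ε • y + α • x)‖ = t := by
  obtain ⟨c, ⟨hc_nonneg, hc_le⟩, hc_norm⟩ :=
    exists_mem_Icc_norm_smul_eq (by linarith) (x - y) ht
  refine ⟨ε - c, ⟨by linarith, by linarith⟩, ?_⟩
  rwa [smul_add_smul_sub_smul_add_smul_swap, sub_sub_cancel]

end

theorem fagcn_distance_range (ε : ℝ) (hε0 : 0 ≤ ε) (hε1 : ε ≤ 1) (F : ℕ)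
    (hu hv : EuclideanSpace ℝ (Fin F)) (t : ℝ)
    (ht0 : 0 ≤ t) (ht1 : t ≤ (1 + ε) * ‖hu - hv‖) :
    ∃ α : ℝ, α ∈ Set.Icc (-1 : ℝ) 1 ∧
      ‖(ε • hu + α • hv) - (ε • hv + α • hu)‖ = t := by
  obtain ⟨α, hα, hnorm⟩ := fagcn_distance_range_general (by linarith) hu hv ⟨ht0, ht1⟩
  exact ⟨α, Set.Icc_subset_Icc_right hε1 hα, hnorm⟩
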